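/- Let x be a random variable taking values in a finite set X, let V be a finite set, and let z = (z_1, …, z_K) be a random vector taking values in V^K, jointly distributed with x. Fix i ∈ {3, …, K} and suppose z_{i−1} and z_i are conditionally independent given (x, z_{≤i−2}), and that I(z_i; x | z_{≤i−1}) > I(z_{i−1}; x | z_{≤i−2}). Let z' be obtained from z by exchanging coordinates i−1 and i (i.e., z'_{i−1} = z_i, z'_i = z_{i−1}, and z'_k = z_k for all other k). Then Σ_{k=1}^K I(x; z'_{≤k}) > Σ_{k=1}^K I(x; z_{≤k}). -/

import Mathlib

open Finset

/-- A probability mass function on a finite type. -/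
def IsPMF {Ω : Type*} [Fintype Ω] (μ : Ω → ℝ) : Prop :=
  (∀ ω, 0 ≤ μ ω) ∧ ∑ ω, μ ω = 1

/-- The probability that the random variable `f` takes the value `a`. -/
def pr {Ω A : Type*} [Fintype Ω] [DecidableEq A] (μ : Ω → ℝ) (f : Ω → A) (a : A) : ℝ :=
  ∑ ω, if f ω = a then μ ω else 0

/-- Mutual information `I(f; g)`; terms with zero joint probability contribute `0`. -/
noncomputable def mi {Ω A B : Type*} [Fintype Ω] [Fintype A] [Fintype B]
    [DecidableEq A] [DecidableEq B] (μ : Ω → ℝ) (f : Ω → A) (g : Ω → B) : ℝ :=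
  ∑ a : A, ∑ b : B,
    pr μ (fun ω => (f ω, g ω)) (a, b) *
      Real.log (pr μ (fun ω => (f ω, g ω)) (a, b) / (pr μ f a * pr μ g b))

/-- Conditional mutual information `I(f; g | h)`. -/
noncomputable def cmi {Ω A B C : Type*} [Fintype Ω] [Fintype A] [Fintype B] [Fintype C]
    [DecidableEq A] [DecidableEq B] [DecidableEq C]
    (μ : Ω → ℝ) (f : Ω → A) (g : Ω → B) (h : Ω → C) : ℝ :=
  ∑ c : C, ∑ a : A, ∑ b : B,
    pr μ (fun ω => ((f ω, g ω), h ω)) ((a, b), c) *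
      Real.log (pr μ (fun ω => ((f ω, g ω), h ω)) ((a, b), c) * pr μ h c /
        (pr μ (fun ω => (f ω, h ω)) (a, c) * pr μ (fun ω => (g ω, h ω)) (b, c)))

/-- `f` and `g` are conditionally independent given `h`. -/
def CondIndepRV {Ω A B C : Type*} [Fintype Ω] [DecidableEq A] [DecidableEq B] [DecidableEq C]
    (μ : Ω → ℝ) (f : Ω → A) (g : Ω → B) (h : Ω → C) : Prop :=
  ∀ a b c, 0 < pr μ h c →
    pr μ (fun ω => ((f ω, g ω), h ω)) ((a, b), c) * pr μ h c =
      pr μ (fun ω => (f ω, h ω)) (a, c) * pr μ (fun ω => (g ω, h ω)) (b, c)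

/-- Entropy `H(f)`. -/
noncomputable def ent {Ω A : Type*} [Fintype Ω] [Fintype A] [DecidableEq A]
    (μ : Ω → ℝ) (f : Ω → A) : ℝ :=
  -∑ a : A, pr μ f a * Real.log (pr μ f a)

/-- Conditional entropy `H(f | g)`. -/
noncomputable def condEnt {Ω A B : Type*} [Fintype Ω] [Fintype A] [Fintype B]
    [DecidableEq A] [DecidableEq B] (μ : Ω → ℝ) (f : Ω → A) (g : Ω → B) : ℝ :=
  -∑ a : A, ∑ b : B,
    pr μ (fun ω => (f ω, g ω)) (a, b) *
      Real.log (pr μ (fun ω => (f ω, g ω)) (a, b) / pr μ g b)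

/-- The joint pmf of `(x, z)` induced by the data pmf `pd` and the encoder `q`. -/
def joint {X Z : Type*} (pd : X → ℝ) (q : X → Z → ℝ) : X × Z → ℝ :=
  fun ω => pd ω.1 * q ω.1 ω.2

/-- The first `i` coordinates `z_{≤ i}` of a vector `z ∈ V^K`. -/
def trunc {V : Type*} {K : ℕ} (i : ℕ) (h : i ≤ K) (v : Fin K → V) : Fin i → V :=
  fun j => v (Fin.castLE h j)

/-- `- log x` valued in the extended reals, with `- log 0 = ⊤`. -/
noncomputable def negLog (x : ℝ) : EReal := if x = 0 then ⊤ else ((-Real.log x : ℝ) : EReal)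

/-- An encoder is a conditional pmf `q(z | x)`. -/
def IsEncoder {X Z : Type*} [Fintype Z] (q : X → Z → ℝ) : Prop :=
  ∀ a, (∀ v, 0 ≤ q a v) ∧ ∑ v, q a v = 1

/-- A decoder is a family of conditional pmfs `p_i(x | z_{≤ i})`, `i = 1, …, K`. -/
def IsDecoder {X V : Type*} [Fintype X] (K : ℕ) (d : (i : ℕ) → (Fin i → V) → X → ℝ) : Prop :=
  ∀ i, 1 ≤ i → i ≤ K → ∀ zc : Fin i → V, (∀ a, 0 ≤ d i zc a) ∧ ∑ a, d i zc a = 1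

/-- The objective `L(q, {p_i}) = (1/K) ∑_{i=1}^K E[- log p_i(x | z_{≤ i})]`. -/
noncomputable def objL {X V : Type*} [Fintype X] [Fintype V] (K : ℕ)
    (pd : X → ℝ) (q : X → (Fin K → V) → ℝ) (d : (i : ℕ) → (Fin i → V) → X → ℝ) : EReal :=
  ((1 / K : ℝ) : EReal) *
    ∑ i : Fin K, ∑ a : X, ∑ v : Fin K → V,
      ((pd a * q a v : ℝ) : EReal) * negLog (d (i.1 + 1) (trunc (i.1 + 1) i.isLt v) a)

/-!
Writing `a = z_{i-1}`, `b = z_i` and `w = z_{≤ i-2}`, the swap only affects the summand `k = i - 1`,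
because every other prefix of `z'` is a rearrangement of the same prefix of `z`. By the chain rule
that summand changes by `I(b; x | w) - I(a; x | w)`. Expanding `I(b; (a, x) | w)` in two ways gives
`I(b; x | w, a) + I(a; b | w) = I(b; x | w) + I(a; b | x, w)`, where the last term vanishes by
conditional independence and `I(a; b | w) ≥ 0`, so that
`I(b; x | w) ≥ I(b; x | w, a) > I(a; x | w)`.
-/

section Probability

variable {Ω A B C : Type*} [Fintype Ω] [DecidableEq A] [DecidableEq B] [DecidableEq C]
  {μ : Ω → ℝ}

lemma pr_nonneg (hμ : ∀ ω, 0 ≤ μ ω) (f : Ω → A) (a : A) : 0 ≤ pr μ f a :=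
  sum_nonneg fun ω _ => by split_ifs <;> simp only [hμ ω, le_refl]

lemma pr_mono (hμ : ∀ ω, 0 ≤ μ ω) {f : Ω → A} {g : Ω → B} {a : A} {b : B}
    (hfg : ∀ ω, f ω = a → g ω = b) : pr μ f a ≤ pr μ g b := by
  refine sum_le_sum fun ω _ => ?_
  by_cases hf : f ω = a
  · rw [if_pos hf, if_pos (hfg ω hf)]
  · rw [if_neg hf]
    split_ifs <;> simp only [hμ ω, le_refl]

lemma pr_self_pos (hμ : ∀ ω, 0 ≤ μ ω) (f : Ω → A) {ω : Ω} (hω : 0 < μ ω) :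
    0 < pr μ f (f ω) :=
  sum_pos' (fun ω' _ => by split_ifs <;> simp only [hμ ω', le_refl])
    ⟨ω, mem_univ ω, by rwa [if_pos rfl]⟩

lemma sum_pr_mul [Fintype A] (μ : Ω → ℝ) (f : Ω → A) (F : A → ℝ) :
    ∑ a, pr μ f a * F a = ∑ ω, μ ω * F (f ω) := by
  simp only [pr, sum_mul, ite_mul, zero_mul]
  rw [sum_comm]
  simp only [sum_ite_eq, mem_univ, if_true]

lemma sum_pr_prodMk [Fintype A] (μ : Ω → ℝ) (f : Ω → A) (h : Ω → C) (c : C) :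
    ∑ a, pr μ (fun ω => (f ω, h ω)) (a, c) = pr μ h c := by
  simp only [pr, Prod.mk.injEq, ite_and]
  rw [sum_comm]
  simp only [sum_ite_eq, mem_univ, if_true]

lemma sum_pr_sub_mul_div_eq_zero [Fintype A] [Fintype B] (μ : Ω → ℝ) (f : Ω → A) (g : Ω → B)
    (h : Ω → C) (c : C) :
    ∑ a, ∑ b, (pr μ (fun ω => ((f ω, g ω), h ω)) ((a, b), c) -
      pr μ (fun ω => (f ω, h ω)) (a, c) * pr μ (fun ω => (g ω, h ω)) (b, c) / pr μ h c) = 0 := by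
  have hjoint := sum_pr_prodMk μ (fun ω => (f ω, g ω)) h c
  rw [Fintype.sum_prod_type] at hjoint
  simp only [sum_sub_distrib, ← sum_div, ← mul_sum, ← sum_mul]
  rw [hjoint, sum_pr_prodMk, sum_pr_prodMk, mul_self_div_self, sub_self]

end Probability

section Information

variable {Ω A B C D : Type*} [Fintype Ω] [Fintype A] [Fintype B] [Fintype C] [Fintype D]
  [DecidableEq A] [DecidableEq B] [DecidableEq C] [DecidableEq D] {μ : Ω → ℝ}

lemma ent_eq_neg_sum (μ : Ω → ℝ) (f : Ω → A) :
    ent μ f = -∑ ω, μ ω * Real.log (pr μ f (f ω)) := by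
  rw [ent, sum_pr_mul μ f fun a => Real.log (pr μ f a)]

lemma ent_congr {f : Ω → A} {g : Ω → B} (hfg : ∀ ω ω', f ω = f ω' ↔ g ω = g ω') :
    ent μ f = ent μ g := by
  simp only [ent_eq_neg_sum, pr, hfg]

lemma ent_prodMk_congr_right (f : Ω → A) {g : Ω → B} {g' : Ω → C}
    (hg : ∀ ω ω', g ω = g ω' ↔ g' ω = g' ω') :
    ent μ (fun ω => (f ω, g ω)) = ent μ fun ω => (f ω, g' ω) :=
  ent_congr fun ω ω' => by simp only [Prod.mk.injEq, hg]

lemma mi_eq_ent (hμ : ∀ ω, 0 ≤ μ ω) (f : Ω → A) (g : Ω → B) :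
    mi μ f g = ent μ f + ent μ g - ent μ fun ω => (f ω, g ω) := by
  have hsum := sum_pr_mul μ (fun ω => (f ω, g ω)) fun p =>
    Real.log (pr μ (fun ω => (f ω, g ω)) p / (pr μ f p.1 * pr μ g p.2))
  rw [Fintype.sum_prod_type] at hsum
  rw [mi, hsum, ent_eq_neg_sum, ent_eq_neg_sum, ent_eq_neg_sum, sub_neg_eq_add, ← neg_add,
    ← sum_add_distrib, neg_add_eq_sub, ← sum_sub_distrib]
  refine sum_congr rfl fun ω _ => ?_
  rcases (hμ ω).eq_or_lt with hω | hω
  · simp [← hω]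
  have hf := pr_self_pos hμ f hω
  have hg := pr_self_pos hμ g hω
  have hfg := pr_self_pos hμ (fun ω => (f ω, g ω)) hω
  rw [Real.log_div hfg.ne' (by positivity), Real.log_mul hf.ne' hg.ne']
  ring

lemma cmi_eq_ent (hμ : ∀ ω, 0 ≤ μ ω) (f : Ω → A) (g : Ω → B) (h : Ω → C) :
    cmi μ f g h = ent μ (fun ω => (f ω, h ω)) + ent μ (fun ω => (g ω, h ω))
      - ent μ (fun ω => ((f ω, g ω), h ω)) - ent μ h := by
  have hsum := sum_pr_mul μ (fun ω => ((f ω, g ω), h ω)) fun p =>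
    Real.log (pr μ (fun ω => ((f ω, g ω), h ω)) p * pr μ h p.2 /
      (pr μ (fun ω => (f ω, h ω)) (p.1.1, p.2) * pr μ (fun ω => (g ω, h ω)) (p.1.2, p.2)))
  rw [Fintype.sum_prod_type_right] at hsum
  simp only [Fintype.sum_prod_type] at hsum
  rw [cmi]
  simp only [ent_eq_neg_sum, sub_neg_eq_add]
  rw [hsum, ← neg_add, ← sum_add_distrib, neg_add_eq_sub, ← sum_sub_distrib, ← sum_add_distrib]
  refine sum_congr rfl fun ω _ => ?_
  rcases (hμ ω).eq_or_lt with hω | hω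
  · simp [← hω]
  have hh := pr_self_pos hμ h hω
  have hfh := pr_self_pos hμ (fun ω => (f ω, h ω)) hω
  have hgh := pr_self_pos hμ (fun ω => (g ω, h ω)) hω
  have hfgh := pr_self_pos hμ (fun ω => ((f ω, g ω), h ω)) hω
  rw [Real.log_div (by positivity) (by positivity), Real.log_mul hfgh.ne' hh.ne',
    Real.log_mul hfh.ne' hgh.ne']
  ring

lemma mi_congr_right (hμ : ∀ ω, 0 ≤ μ ω) (f : Ω → A) {g : Ω → B} {g' : Ω → C}
    (hg : ∀ ω ω', g ω = g ω' ↔ g' ω = g' ω') : mi μ f g = mi μ f g' := by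
  rw [mi_eq_ent hμ, mi_eq_ent hμ, ent_congr hg, ent_prodMk_congr_right f hg]

lemma cmi_congr_right (hμ : ∀ ω, 0 ≤ μ ω) (f : Ω → A) (g : Ω → B) {h : Ω → C} {h' : Ω → D}
    (hh : ∀ ω ω', h ω = h ω' ↔ h' ω = h' ω') : cmi μ f g h = cmi μ f g h' := by
  rw [cmi_eq_ent hμ, cmi_eq_ent hμ, ent_congr hh, ent_prodMk_congr_right f hh,
    ent_prodMk_congr_right g hh, ent_prodMk_congr_right (fun ω => (f ω, g ω)) hh]

lemma mi_prodMk_right (hμ : ∀ ω, 0 ≤ μ ω) (f : Ω → A) (g : Ω → B) (h : Ω → C) :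
    mi μ f (fun ω => (h ω, g ω)) = mi μ f h + cmi μ g f h := by
  have pair : ent μ (fun ω => (h ω, g ω)) = ent μ fun ω => (g ω, h ω) :=
    ent_congr fun _ _ => by grind
  have triple : ent μ (fun ω => (f ω, (h ω, g ω))) = ent μ fun ω => ((g ω, f ω), h ω) :=
    ent_congr fun _ _ => by grind
  rw [mi_eq_ent hμ, mi_eq_ent hμ, cmi_eq_ent hμ, pair, triple]
  ring

/-- Both sides are the two chain rule expansions of `I(g; (f, k) | h)`. -/
lemma cmi_prodMk_right_add_cmi (hμ : ∀ ω, 0 ≤ μ ω) (f : Ω → A) (g : Ω → B) (k : Ω → C)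
    (h : Ω → D) :
    cmi μ g k (fun ω => (h ω, f ω)) + cmi μ f g h =
      cmi μ g k h + cmi μ f g fun ω => (k ω, h ω) := by
  have hf : ent μ (fun ω => (h ω, f ω)) = ent μ fun ω => (f ω, h ω) :=
    ent_congr fun _ _ => by grind
  have hfg : ent μ (fun ω => (g ω, (h ω, f ω))) = ent μ fun ω => ((f ω, g ω), h ω) :=
    ent_congr fun _ _ => by grind
  have hfk : ent μ (fun ω => (k ω, (h ω, f ω))) = ent μ fun ω => (f ω, (k ω, h ω)) :=
    ent_congr fun _ _ => by grind
  have hgk : ent μ (fun ω => (g ω, (k ω, h ω))) = ent μ fun ω => ((g ω, k ω), h ω) :=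
    ent_congr fun _ _ => by grind
  have hfgk : ent μ (fun ω => ((g ω, k ω), (h ω, f ω))) =
      ent μ fun ω => ((f ω, g ω), (k ω, h ω)) :=
    ent_congr fun _ _ => by grind
  simp only [cmi_eq_ent hμ, hf, hfg, hfk, hgk, hfgk]
  ring

lemma sub_mul_div_le_mul_log {p q r s : ℝ} (hp : 0 ≤ p) (hq : p ≤ q) (hr : p ≤ r) (hs : p ≤ s) :
    p - r * s / q ≤ p * Real.log (p * q / (r * s)) := by
  rcases hp.eq_or_lt with rfl | hp
  · simp only [zero_sub, zero_mul, neg_nonpos]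
    positivity
  have hq := hp.trans_le hq
  have hr := hp.trans_le hr
  have hs := hp.trans_le hs
  calc p - r * s / q = p * (1 - (p * q / (r * s))⁻¹) := by field_simp
    _ ≤ p * Real.log (p * q / (r * s)) :=
      mul_le_mul_of_nonneg_left (Real.one_sub_inv_le_log_of_pos (by positivity)) hp.le

lemma cmi_nonneg (hμ : ∀ ω, 0 ≤ μ ω) (f : Ω → A) (g : Ω → B) (h : Ω → C) :
    0 ≤ cmi μ f g h := by
  rw [cmi]
  refine sum_nonneg fun c _ => (sum_pr_sub_mul_div_eq_zero μ f g h c).ge.trans ?_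
  refine sum_le_sum fun a _ => sum_le_sum fun b _ => ?_
  exact sub_mul_div_le_mul_log (pr_nonneg hμ _ _)
    (pr_mono hμ (by simp +contextual)) (pr_mono hμ (by simp +contextual))
    (pr_mono hμ (by simp +contextual))

lemma CondIndepRV.cmi_eq_zero (hμ : ∀ ω, 0 ≤ μ ω) {f : Ω → A} {g : Ω → B} {h : Ω → C}
    (hfg : CondIndepRV μ f g h) : cmi μ f g h = 0 := by
  refine sum_eq_zero fun c _ => sum_eq_zero fun a _ => sum_eq_zero fun b _ => ?_
  rcases (pr_nonneg hμ h c).eq_or_lt with hc | hc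
  · simp [← hc]
  · rw [← hfg a b c hc, Real.log_div_self, mul_zero]

lemma CondIndepRV.cmi_prodMk_le (hμ : ∀ ω, 0 ≤ μ ω) {f : Ω → A} {g : Ω → B} {k : Ω → C}
    {h : Ω → D} (hfg : CondIndepRV μ f g fun ω => (k ω, h ω)) :
    cmi μ g k (fun ω => (h ω, f ω)) ≤ cmi μ g k h := by
  have hexchange := cmi_prodMk_right_add_cmi hμ f g k h
  rw [hfg.cmi_eq_zero hμ, add_zero] at hexchange
  exact hexchange ▸ le_add_of_nonneg_right (cmi_nonneg hμ f g h)

lemma CondIndepRV.mi_prodMk_lt (hμ : ∀ ω, 0 ≤ μ ω) {f : Ω → A} {g : Ω → B} {k : Ω → C}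
    {h : Ω → D} (hfg : CondIndepRV μ f g fun ω => (k ω, h ω))
    (hlt : cmi μ f k h < cmi μ g k fun ω => (h ω, f ω)) :
    mi μ k (fun ω => (h ω, f ω)) < mi μ k fun ω => (h ω, g ω) := by
  rw [mi_prodMk_right hμ, mi_prodMk_right hμ]
  gcongr
  exact hlt.trans_le (hfg.cmi_prodMk_le hμ)

end Information

section Prefix

variable {V : Type*} {K : ℕ}

lemma trunc_eq_trunc_iff {m : ℕ} (hm : m ≤ K) (v w : Fin K → V) :
    trunc m hm v = trunc m hm w ↔ ∀ l : Fin K, (l : ℕ) < m → v l = w l :=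
  ⟨fun hvw l hl => congrFun hvw ⟨l, hl⟩, fun hvw => funext fun l => hvw _ l.isLt⟩

lemma trunc_succ_eq_trunc_succ_iff {j : ℕ} (hj : j < K) (v w : Fin K → V) :
    trunc (j + 1) hj v = trunc (j + 1) hj w ↔
      (trunc j hj.le v, v ⟨j, hj⟩) = (trunc j hj.le w, w ⟨j, hj⟩) := by
  rw [Prod.mk.injEq, trunc_eq_trunc_iff, trunc_eq_trunc_iff]
  refine ⟨fun hvw => ⟨fun l hl => hvw l (by omega), hvw _ j.lt_succ_self⟩, ?_⟩
  rintro ⟨hlt, heq⟩ l hl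
  rcases Nat.lt_succ_iff_lt_or_eq.1 hl with hl | rfl
  · exact hlt l hl
  · exact heq

lemma trunc_comp_perm_eq_iff {m : ℕ} (hm : m ≤ K) {σ : Equiv.Perm (Fin K)}
    (hσ : ∀ l, (σ l : ℕ) < m ↔ (l : ℕ) < m) (v w : Fin K → V) :
    trunc m hm (v ∘ σ) = trunc m hm (w ∘ σ) ↔ trunc m hm v = trunc m hm w := by
  rw [trunc_eq_trunc_iff, trunc_eq_trunc_iff]
  exact σ.forall_congr fun l => by rw [hσ, Function.comp_apply, Function.comp_apply]

lemma swap_succ_lt_iff {j m : ℕ} (hj : j + 1 < K) (hm : m ≠ j + 1) (l : Fin K) :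
    (Equiv.swap (⟨j, by omega⟩ : Fin K) ⟨j + 1, hj⟩ l : ℕ) < m ↔ (l : ℕ) < m := by
  rw [Equiv.swap_apply_def]
  split_ifs with hl hl <;> simp only [hl] <;> omega

lemma trunc_comp_swap_succ {j : ℕ} (hj : j + 1 < K) (v : Fin K → V) :
    trunc j (by omega) (v ∘ Equiv.swap ⟨j, by omega⟩ ⟨j + 1, hj⟩) = trunc j (by omega) v := by
  refine (trunc_eq_trunc_iff _ _ _).2 fun l hl => ?_
  rw [Function.comp_apply, Equiv.swap_apply_of_ne_of_ne] <;> exact Fin.ne_of_val_ne (by grind)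

end Prefix

theorem swap_increases_information_sum_general
    {Ω X V : Type*} [Fintype Ω] [Fintype X] [Fintype V] [DecidableEq X] [DecidableEq V]
    {K : ℕ} {μ : Ω → ℝ} (hμ : IsPMF μ) (x : Ω → X) (z : Ω → Fin K → V)
    {j : ℕ} (hj : j + 1 < K)
    (hci : CondIndepRV μ (fun ω => z ω ⟨j, by omega⟩) (fun ω => z ω ⟨j + 1, hj⟩)
      (fun ω => (x ω, trunc j (by omega) (z ω))))
    (hgt : cmi μ (fun ω => z ω ⟨j, by omega⟩) x (fun ω => trunc j (by omega) (z ω)) <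
      cmi μ (fun ω => z ω ⟨j + 1, hj⟩) x (fun ω => trunc (j + 1) hj.le (z ω))) :
    ∑ k : Fin K, mi μ x (fun ω => trunc (k.1 + 1) k.isLt (z ω)) <
      ∑ k : Fin K, mi μ x (fun ω => trunc (k.1 + 1) k.isLt
        (z ω ∘ Equiv.swap ⟨j, by omega⟩ ⟨j + 1, hj⟩)) := by
  have hjK : j < K := by omega
  have hne (k : Fin K) (hk : (k : ℕ) ≠ j) :
      mi μ x (fun ω => trunc (k.1 + 1) k.isLt (z ω)) =
        mi μ x (fun ω => trunc (k.1 + 1) k.isLt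
          (z ω ∘ Equiv.swap ⟨j, by omega⟩ ⟨j + 1, hj⟩)) :=
    mi_congr_right hμ.1 x fun _ _ =>
      (trunc_comp_perm_eq_iff _ (swap_succ_lt_iff hj (by omega)) _ _).symm
  have hlt : mi μ x (fun ω => trunc (j + 1) hjK (z ω)) <
      mi μ x (fun ω => trunc (j + 1) hjK (z ω ∘ Equiv.swap ⟨j, by omega⟩ ⟨j + 1, hj⟩)) := by
    have hsucc (u : Ω → Fin K → V) ω ω' := trunc_succ_eq_trunc_succ_iff hjK (u ω) (u ω')
    rw [cmi_congr_right hμ.1 _ _ (hsucc z)] at hgt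
    rw [mi_congr_right hμ.1 x (hsucc z), mi_congr_right hμ.1 x (hsucc _)]
    simpa only [trunc_comp_swap_succ, Function.comp_apply, Equiv.swap_apply_left]
      using hci.mi_prodMk_lt hμ.1 hgt
  refine sum_lt_sum (fun k _ => ?_) ⟨⟨j, hjK⟩, mem_univ _, hlt⟩
  rcases eq_or_ne k ⟨j, hjK⟩ with rfl | hk
  · exact hlt.le
  · exact (hne k (Fin.val_ne_of_ne hk)).le

/-- Fix `i ∈ {3, …, K}`. If `z_{i-1} ⊥ z_i ∣ (x, z_{≤ i-2})` and
`I(z_i; x ∣ z_{≤ i-1}) > I(z_{i-1}; x ∣ z_{≤ i-2})`, then exchanging coordinates `i-1` and `i`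
strictly increases `∑_{k=1}^K I(x; z_{≤ k})`. (Coordinates are 1-indexed, so coordinate `i`
is the entry of index `i - 1` of a `Fin K`-indexed vector.) -/
theorem swap_increases_information_sum
    {Ω X V : Type*} [Fintype Ω] [Fintype X] [Fintype V] [DecidableEq X] [DecidableEq V]
    (K : ℕ) (μ : Ω → ℝ) (hμ : IsPMF μ)
    (x : Ω → X) (z : Ω → (Fin K → V))
    (i : ℕ) (h3 : 3 ≤ i) (hiK : i ≤ K)
    (hci : CondIndepRV μ
      (fun ω => z ω (⟨i - 2, by omega⟩ : Fin K))
      (fun ω => z ω (⟨i - 1, by omega⟩ : Fin K))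
      (fun ω => (x ω, trunc (i - 2) (by omega) (z ω))))
    (hgt : cmi μ (fun ω => z ω (⟨i - 2, by omega⟩ : Fin K)) x
        (fun ω => trunc (i - 2) (by omega) (z ω)) <
      cmi μ (fun ω => z ω (⟨i - 1, by omega⟩ : Fin K)) x
        (fun ω => trunc (i - 1) (by omega) (z ω)))
    (z' : Ω → (Fin K → V))
    (hz' : ∀ ω (k : Fin K), z' ω k =
      if (k : ℕ) = i - 2 then z ω (⟨i - 1, by omega⟩ : Fin K)
      else if (k : ℕ) = i - 1 then z ω (⟨i - 2, by omega⟩ : Fin K)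
      else z ω k) :
    ∑ k : Fin K, mi μ x (fun ω => trunc (k.1 + 1) k.isLt (z ω)) <
      ∑ k : Fin K, mi μ x (fun ω => trunc (k.1 + 1) k.isLt (z' ω)) := by
  obtain ⟨j, rfl⟩ : ∃ j, i = j + 2 := ⟨i - 2, by omega⟩
  obtain rfl : z' = fun ω => z ω ∘ Equiv.swap ⟨j, by omega⟩ ⟨j + 1, by omega⟩ :=
    funext₂ fun ω k => by simp [hz', Equiv.swap_apply_def, Fin.ext_iff, apply_ite (z ω)]
  exact swap_increases_information_sum_general hμ x z (by omega) hci hgt
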